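/- arXiv:1211.3056 — 3 statements merged into one kernel-verified Lean document; each statement's English description precedes it below -/
import Mathlib

section
/- Three-distance theorem: Let 0 < a < 1 be an irrational real number and let n ≥ 1. Write the n points {a·x mod 1 : 0 ≤ x < n} in increasing order as 0 = s₀ < s₁ < ⋯ < s_{n−1} < 1, and consider the n gap lengths s₁ − s₀, …, s_{n−1} − s_{n−2}, 1 − s_{n−1}. Then the set of distinct gap lengths has at most three elements, and if it has exactly three elements, the largest one equals the sum of the two others. -/
/-- The configuration of `n` points `{a·x mod 1 : 0 ≤ x < n}` on the unit segment. -/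
noncomputable def pts (a : ℝ) (n : ℕ) : Finset ℝ :=
  (Finset.range n).image fun x : ℕ => Int.fract (a * x)

/-- The length of the gap of the configuration of `n` points whose left endpoint is `s`:
the distance from `s` to the next point of the configuration to its right,
or to `1` if `s` is the largest point. -/
noncomputable def gapAt (a : ℝ) (n : ℕ) (s : ℝ) : ℝ :=
  sInf {d : ℝ | 0 < d ∧ (s + d = 1 ∨ s + d ∈ pts a n)}

/-!
The pairs `(m, d)` with `d ≡ a * m` modulo `1` form a subgroup of `ℤ × ℝ`, and the gap at a point
of index `x` is the least positive `d` in a pair whose `m` lies in the window `[-x, n - 1 - x]` of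
admissible index shifts. Let `(p, α)` and `(q, β)` realise the gaps at the indices `0` and `n - 1`,
that is, over the windows `[0, n - 1]` and `[1 - n, 0]`. Over any window of this length that
contains `0`, the least `d`, attained at `m`, is at least `α` if `0 ≤ m` and at least `β` if
`m ≤ 0`. If the bound is not attained then `p` (respectively `q`) lies outside the window, and
subtracting `(p, α)` (respectively `(q, β)`) from `(m, d)` gives `α + β ≤ d`; then both `p` and `q`
lie outside the window, so `p + q` lies inside it and `d = α + β`.
-/

open Set

section OrderedGroup

variable {M G : Type*}
  [AddCommGroup M] [LinearOrder M] [IsOrderedAddMonoid M]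
  [AddCommGroup G] [LinearOrder G] [IsOrderedAddMonoid G]

/-- The positive heights of the points `(m, d)` of `Γ` that lie over `I`: the first coordinate is
regarded as the base and the second one as the height. -/
def posHeights (Γ : AddSubgroup (M × G)) (I : Set M) : Set G :=
  {d | 0 < d ∧ ∃ m ∈ I, (m, d) ∈ Γ}

theorem eq_or_eq_or_eq_add_of_isLeast_posHeights {Γ : AddSubgroup (M × G)} {l u : M} {α β d : G}
    (hl : l ≤ 0) (hu : 0 ≤ u)
    (hα : IsLeast (posHeights Γ (Icc 0 (u - l))) α)
    (hβ : IsLeast (posHeights Γ (Icc (l - u) 0)) β)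
    (hd : IsLeast (posHeights Γ (Icc l u)) d) :
    d = α ∨ d = β ∨ d = α + β := by
  obtain ⟨⟨α_pos, p, ⟨p_nonneg, p_le⟩, hp⟩, α_min⟩ := hα
  obtain ⟨⟨β_pos, q, ⟨le_q, q_nonpos⟩, hq⟩, β_min⟩ := hβ
  obtain ⟨⟨d_pos, m, ⟨l_le_m, m_le_u⟩, hm⟩, d_min⟩ := hd
  have d_le_α (hpu : p ≤ u) : d ≤ α := d_min ⟨α_pos, p, ⟨hl.trans p_nonneg, hpu⟩, hp⟩
  have d_le_β (hlq : l ≤ q) : d ≤ β := d_min ⟨β_pos, q, ⟨hlq, q_nonpos.trans hu⟩, hq⟩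
  have d_le_add (hpu : u < p) (hql : q < l) : d ≤ α + β :=
    d_min ⟨add_pos α_pos β_pos, p + q, ⟨by grind, by grind⟩, Γ.add_mem hp hq⟩
  rcases le_total 0 m with m_nonneg | m_nonpos
  · have α_le : α ≤ d := α_min ⟨d_pos, m, ⟨m_nonneg, by grind⟩, hm⟩
    rcases α_le.eq_or_lt with rfl | α_lt
    · exact .inl rfl
    have u_lt_p : u < p := lt_of_not_ge fun hpu => (d_le_α hpu).not_gt α_lt
    have add_le : α + β ≤ d := le_sub_iff_add_le'.1 <|
      β_min ⟨sub_pos.2 α_lt, m - p, ⟨by grind, by grind⟩, Γ.sub_mem hm hp⟩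
    have q_lt_l : q < l := lt_of_not_ge fun hlq =>
      (d_le_β hlq).not_gt ((lt_add_of_pos_left β α_pos).trans_le add_le)
    exact .inr (.inr ((d_le_add u_lt_p q_lt_l).antisymm add_le))
  · have β_le : β ≤ d := β_min ⟨d_pos, m, ⟨by grind, m_nonpos⟩, hm⟩
    rcases β_le.eq_or_lt with rfl | β_lt
    · exact .inr (.inl rfl)
    have q_lt_l : q < l := lt_of_not_ge fun hlq => (d_le_β hlq).not_gt β_lt
    have add_le : α + β ≤ d := le_sub_iff_add_le.1 <|
      α_min ⟨sub_pos.2 β_lt, m - q, ⟨by grind, by grind⟩, Γ.sub_mem hm hq⟩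
    have u_lt_p : u < p := lt_of_not_ge fun hpu =>
      (d_le_α hpu).not_gt ((lt_add_of_pos_right α β_pos).trans_le add_le)
    exact .inr (.inr ((d_le_add u_lt_p q_lt_l).antisymm add_le))

theorem exists_lt_lt_eq_add_of_subset_of_card_eq_three {s : Finset G} {α β : G}
    (hα : 0 < α) (hβ : 0 < β) (hs : s ⊆ {α, β, α + β}) (hcard : s.card = 3) :
    ∃ g₁ g₂ g₃ : G, g₁ < g₂ ∧ g₂ < g₃ ∧ s = {g₁, g₂, g₃} ∧ g₃ = g₁ + g₂ := by
  wlog hle : α ≤ β generalizing α β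
  · exact this hβ hα (by rwa [Finset.insert_comm, add_comm β α]) (le_of_not_ge hle)
  have hs_eq : s = {α, β, α + β} :=
    Finset.eq_of_subset_of_card_le hs (Finset.card_le_three.trans hcard.ge)
  have hne : α ≠ β := by
    rintro rfl
    have : s.card ≤ 2 := by
      rw [hs_eq, Finset.insert_idem]
      exact Finset.card_le_two
    omega
  exact ⟨α, β, α + β, hle.lt_of_ne hne, lt_add_of_pos_left β hα, hs_eq, rfl⟩

end OrderedGroup

/-- The lattice of the rotation by `a`: the pairs `(m, d)` such that moving by `d` on the circle
`ℝ / ℤ` amounts to `m` steps of the rotation. -/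
def rotationLattice (a : ℝ) : AddSubgroup (ℤ × ℝ) where
  carrier := {v | ∃ k : ℤ, v.2 = a * v.1 - k}
  zero_mem' := ⟨0, by simp⟩
  add_mem' := by
    rintro v w ⟨k, hk⟩ ⟨j, hj⟩
    refine ⟨k + j, ?_⟩
    simp only [Prod.fst_add, Prod.snd_add, hk, hj]
    push_cast
    ring
  neg_mem' := by
    rintro v ⟨k, hk⟩
    refine ⟨-k, ?_⟩
    simp only [Prod.fst_neg, Prod.snd_neg, hk]
    push_cast
    ring

section Gaps

variable {a s : ℝ} {n : ℕ}

theorem mk_fract_mem_rotationLattice (a : ℝ) (m : ℤ) :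
    (m, Int.fract (a * m)) ∈ rotationLattice a :=
  ⟨⌊a * m⌋, rfl⟩

theorem zero_one_mem_rotationLattice (a : ℝ) : ((0, 1) : ℤ × ℝ) ∈ rotationLattice a :=
  ⟨-1, by simp⟩

theorem mem_pts_iff :
    s ∈ pts a n ↔ s ∈ Ico 0 1 ∧ ∃ x ∈ Ico (0 : ℤ) n, (x, s) ∈ rotationLattice a := by
  simp only [pts, Finset.mem_image, Finset.mem_range]
  constructor
  · rintro ⟨x, hx, rfl⟩
    exact ⟨⟨Int.fract_nonneg _, Int.fract_lt_one _⟩, x, ⟨by omega, by omega⟩,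
      mk_fract_mem_rotationLattice a x⟩
  · rintro ⟨⟨hs0, hs1⟩, x, ⟨hx0, hxn⟩, k, hk : s = a * x - k⟩
    lift x to ℕ using hx0
    refine ⟨x, by omega, Int.fract_eq_iff.2 ⟨hs0, hs1, k, ?_⟩⟩
    simp only [hk, Int.cast_natCast, sub_sub_cancel]

theorem isLeast_gapAt (a : ℝ) (n : ℕ) (hs : s < 1) :
    IsLeast {d : ℝ | 0 < d ∧ (s + d = 1 ∨ s + d ∈ pts a n)} (gapAt a n s) := by
  have hfin : {d : ℝ | 0 < d ∧ (s + d = 1 ∨ s + d ∈ pts a n)}.Finite :=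
    ((insert 1 (pts a n)).finite_toSet.preimage (add_right_injective s).injOn).subset
      fun d hd => by simpa using hd.2
  have hne : {d : ℝ | 0 < d ∧ (s + d = 1 ∨ s + d ∈ pts a n)}.Nonempty :=
    ⟨1 - s, sub_pos.2 hs, .inl (by ring)⟩
  exact ⟨hne.csInf_mem hfin, fun d hd => csInf_le hfin.bddBelow hd⟩

theorem gapAt_pos (a : ℝ) (n : ℕ) (hs : s < 1) : 0 < gapAt a n s :=
  (isLeast_gapAt a n hs).1.1

theorem isLeast_posHeights_gapAt {x : ℤ} (hs : s ∈ Ico 0 1) (hx : x ∈ Ico (0 : ℤ) n)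
    (hxs : (x, s) ∈ rotationLattice a) :
    IsLeast (posHeights (rotationLattice a) (Icc (-x) (n - 1 - x))) (gapAt a n s) := by
  obtain ⟨hs0, hs1⟩ := hs
  obtain ⟨hx0, hxn⟩ := hx
  obtain ⟨⟨gap_pos, hgap⟩, gap_min⟩ := isLeast_gapAt a n hs1
  refine ⟨⟨gap_pos, ?_⟩, ?_⟩
  · rcases hgap with h_one | h_pts
    · refine ⟨-x, ⟨le_rfl, by omega⟩, ?_⟩
      simpa [← h_one] using sub_mem (zero_one_mem_rotationLattice a) hxs
    · obtain ⟨-, y, ⟨hy0, hyn⟩, hy⟩ := mem_pts_iff.1 h_pts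
      refine ⟨y - x, ⟨by omega, by omega⟩, ?_⟩
      simpa using sub_mem hy hxs
  · rintro d ⟨d_pos, m, ⟨hm0, hmn⟩, hm⟩
    rcases lt_or_ge (s + d) 1 with h_lt | h_ge
    · have h_pts : s + d ∈ pts a n :=
        mem_pts_iff.2 ⟨⟨by positivity, h_lt⟩, x + m, ⟨by omega, by omega⟩, add_mem hxs hm⟩
      exact gap_min ⟨d_pos, .inr h_pts⟩
    · calc gapAt a n s ≤ 1 - s := gap_min ⟨sub_pos.2 hs1, .inl (by ring)⟩
        _ ≤ d := by linarith

theorem gapAt_eq_first_or_last_or_add (hs : s ∈ pts a n) :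
    gapAt a n s = gapAt a n 0 ∨ gapAt a n s = gapAt a n (Int.fract (a * (n - 1 : ℤ))) ∨
      gapAt a n s = gapAt a n 0 + gapAt a n (Int.fract (a * (n - 1 : ℤ))) := by
  obtain ⟨hs01, x, ⟨hx0, hxn⟩, hxs⟩ := mem_pts_iff.1 hs
  have h_first := isLeast_posHeights_gapAt (n := n) (left_mem_Ico.2 one_pos)
    ⟨le_rfl, by omega⟩ (zero_mem (rotationLattice a))
  have h_last := isLeast_posHeights_gapAt (n := n) ⟨Int.fract_nonneg _, Int.fract_lt_one _⟩
    ⟨by omega, by omega⟩ (mk_fract_mem_rotationLattice a (n - 1))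
  have h_gap := isLeast_posHeights_gapAt hs01 ⟨hx0, hxn⟩ hxs
  refine eq_or_eq_or_eq_add_of_isLeast_posHeights (by omega) (by omega) ?_ ?_ h_gap
  · simpa only [sub_neg_eq_add, sub_add_cancel, neg_zero, sub_zero] using h_first
  · rw [show -x - (n - 1 - x) = -(n - 1 : ℤ) by ring]
    simpa only [sub_self] using h_last

end Gaps

theorem three_distance_theorem_general (a : ℝ) (n : ℕ) :
    ((pts a n).image (gapAt a n)).card ≤ 3 ∧
    (((pts a n).image (gapAt a n)).card = 3 →
      ∃ g₁ g₂ g₃ : ℝ, g₁ < g₂ ∧ g₂ < g₃ ∧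
        (pts a n).image (gapAt a n) = {g₁, g₂, g₃} ∧ g₃ = g₁ + g₂) := by
  set α := gapAt a n 0
  set β := gapAt a n (Int.fract (a * (n - 1 : ℤ)))
  have h_subset : (pts a n).image (gapAt a n) ⊆ {α, β, α + β} :=
    Finset.image_subset_iff.2 fun s hs => by
      simpa only [Finset.mem_insert, Finset.mem_singleton] using gapAt_eq_first_or_last_or_add hs
  exact ⟨(Finset.card_le_card h_subset).trans Finset.card_le_three,
    exists_lt_lt_eq_add_of_subset_of_card_eq_three (gapAt_pos a n zero_lt_one)
      (gapAt_pos a n (Int.fract_lt_one _)) h_subset⟩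

/-- **Three-distance theorem.** For `0 < a < 1` irrational and `n ≥ 1`, the set of distinct
gap lengths of the configuration `{a·x mod 1 : 0 ≤ x < n}` has at most three elements, and if
it has exactly three elements then the largest one is the sum of the two others. -/
theorem three_distance_theorem (a : ℝ) (ha0 : 0 < a) (ha1 : a < 1) (hirr : Irrational a)
    (n : ℕ) (hn : 1 ≤ n) :
    ((pts a n).image (gapAt a n)).card ≤ 3 ∧
    (((pts a n).image (gapAt a n)).card = 3 →
      ∃ g₁ g₂ g₃ : ℝ, g₁ < g₂ ∧ g₂ < g₃ ∧
        (pts a n).image (gapAt a n) = {g₁, g₂, g₃} ∧ g₃ = g₁ + g₂) :=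
  three_distance_theorem_general a n
end

section
/- Quantitative three-distance theorem: for every i ≥ 0, every t with 0 ≤ t < k_{i+1}, and every s with 0 ≤ s < q_i, setting n = q_i + q_{i−1,t} + s, the multiset of the n gap lengths of the configuration of n points consists of exactly q_i − s copies of θ_{i−1,t}, exactly s copies of θ_{i−1,t+1}, and exactly q_{i−1,t} + s copies of θ_i. -/
/-- The multiset of the `n` gap lengths of the configuration of `n` points. -/
noncomputable def gaps (a : ℝ) (n : ℕ) : Multiset ℝ :=
  (pts a n).val.map (gapAt a n)

/-!
On the circle `ℝ ⧸ ℤ` the multiple `q_i • a` is the point `± θ_i`, and consecutive signs alternate.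
So `m = q_i` and `l = q_{i-1,t}` satisfy `m • a = ± w` and `l • a = ∓ u`, where `w = θ_i` and
`u = θ_{i-1,t}`. Adding `l + m`, adding `l`, or subtracting `m` therefore moves a point of index
`x < s`, `s ≤ x < m`, or `m ≤ x` to another point of the configuration, at distance `u - w`, `u`,
`w` respectively, always in the same direction. The gap next to each point in this direction is at
most this distance. Since `m * u + l * w = 1`, the distances add up to the length of the circle, as
do the gaps, so each gap is equal to the distance.
-/

lemma map_range_reflect {α : Type*} (f : ℕ → α) (n : ℕ) :
    (Multiset.range n).map (fun x => f (n - 1 - x)) = (Multiset.range n).map f := by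
  have hrev : (List.range n).map (fun x => n - 1 - x) = (List.range n).reverse := by
    simp [List.range_eq_range', List.reverse_range']
  calc (Multiset.range n).map (fun x => f (n - 1 - x))
    _ = ((List.range n).map (fun x => n - 1 - x) : Multiset ℕ).map f :=
      (Multiset.map_map f _ _).symm
    _ = (Multiset.range n).map f := by rw [hrev, Multiset.coe_reverse, Multiset.range]

lemma map_range_eq_replicate {α : Type*} {f : ℕ → α} {n : ℕ} {c : α} (h : ∀ x < n, f x = c) :
    (Multiset.range n).map f = Multiset.replicate n c := by
  rw [Multiset.map_congr rfl fun x hx => h x (Multiset.mem_range.1 hx), Multiset.map_const',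
    Multiset.card_range]

lemma fract_mem_pts {a : ℝ} {n x : ℕ} (hx : x < n) : Int.fract (a * x) ∈ pts a n :=
  Finset.mem_image_of_mem _ (Finset.mem_range.2 hx)

lemma mem_Ico_of_mem_pts {a p : ℝ} {n : ℕ} (hp : p ∈ pts a n) : p ∈ Set.Ico (0 : ℝ) 1 := by
  obtain ⟨x, -, rfl⟩ := Finset.mem_image.1 hp
  exact ⟨Int.fract_nonneg _, Int.fract_lt_one _⟩

lemma zero_mem_pts {a : ℝ} {n : ℕ} (hn : 0 < n) : (0 : ℝ) ∈ pts a n := by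
  simpa using fract_mem_pts (a := a) hn

lemma coe_fract_mul_natCast (a : ℝ) (x : ℕ) :
    ((Int.fract (a * x) : ℝ) : UnitAddCircle) = x • (a : UnitAddCircle) := by
  rw [AddCircle.coe_fract, ← AddCircle.coe_nsmul, nsmul_eq_mul, mul_comm]

lemma injOn_fract_of_card_pts {a : ℝ} {n : ℕ} (hcard : (pts a n).card = n) :
    Set.InjOn (fun x : ℕ => Int.fract (a * x)) (Finset.range n) :=
  Finset.card_image_iff.1 (hcard.trans (Finset.card_range n).symm)

lemma nsmul_ne_zero_of_card_pts {a : ℝ} {n x : ℕ} (hcard : (pts a n).card = n) (hx : x ≠ 0)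
    (hxn : x < n) : x • (a : UnitAddCircle) ≠ 0 := by
  intro h0
  have hfract : Int.fract (a * x) = 0 := by
    rw [← AddCircle.coe_eq_zero_iff_of_mem_Ico (mem_Ico_of_mem_pts (fract_mem_pts hxn)),
      coe_fract_mul_natCast, h0]
  refine hx (injOn_fract_of_card_pts hcard (by simpa using hxn) ?_ (by simpa using hfract))
  simpa using hx.bot_lt.trans hxn

lemma card_pts_of_irrational {a : ℝ} (ha : Irrational a) (n : ℕ) : (pts a n).card = n := by
  have hinf : ¬IsOfFinAddOrder (a : UnitAddCircle) :=
    AddCircle.not_isOfFinAddOrder_iff_forall_rat_ne_div.2 fun r hr =>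
      ha.ne_rat r (by simpa using hr.symm)
  refine (Finset.card_image_of_injective _ fun x y hxy => ?_).trans (Finset.card_range n)
  apply injective_nsmul_iff_not_isOfFinAddOrder.2 hinf
  simpa only [coe_fract_mul_natCast] using congrArg ((↑) : ℝ → UnitAddCircle) hxy

lemma gapAt_nonneg (a : ℝ) (n : ℕ) (p : ℝ) : 0 ≤ gapAt a n p :=
  Real.sInf_nonneg fun _ hd => hd.1.le

lemma gapAt_le {a d p : ℝ} {n : ℕ} (hd : 0 < d) (h : p + d = 1 ∨ p + d ∈ pts a n) :
    gapAt a n p ≤ d :=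
  csInf_le ⟨0, fun _ he => he.1.le⟩ ⟨hd, h⟩

lemma gapAt_le_of_coe_add_eq {a d p p' : ℝ} {n : ℕ} (hp : p ∈ pts a n) (hp' : p' ∈ pts a n)
    (hd : 0 < d) (h : (p : UnitAddCircle) + d = p') : gapAt a n p ≤ d := by
  obtain ⟨hp0, hp1⟩ := mem_Ico_of_mem_pts hp
  rcases lt_or_ge (p + d) 1 with hlt | hge
  · have heq : p + d = p' :=
      (AddCircle.coe_eq_coe_iff_of_mem_Ico (p := (1 : ℝ)) (a := 0)
        ⟨by positivity, by simpa using hlt⟩ (by simpa using mem_Ico_of_mem_pts hp')).1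
        (by rw [AddCircle.coe_add, h])
    exact gapAt_le hd (.inr (heq ▸ hp'))
  · exact (gapAt_le (sub_pos.2 hp1) (.inl (add_sub_cancel p 1))).trans (by linarith)

lemma sub_le_gapAt {a p y : ℝ} {n : ℕ} (hp : p ∈ pts a n) (hy : y < 1)
    (hmax : ∀ p' ∈ pts a n, p' ≤ y → p' ≤ p) : y - p ≤ gapAt a n p := by
  refine le_csInf ⟨1 - p, sub_pos.2 (mem_Ico_of_mem_pts hp).2, .inl (add_sub_cancel p 1)⟩ ?_
  rintro d ⟨hd, hd1 | hmem⟩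
  · linarith
  · by_contra! hlt
    linarith [hmax (p + d) hmem (by linarith)]

lemma Ico_subset_iUnion_Icc_gapAt {a : ℝ} {n : ℕ} (hn : 0 < n) :
    Set.Ico (0 : ℝ) 1 ⊆ ⋃ p ∈ pts a n, Set.Icc p (p + gapAt a n p) := by
  intro y hy
  obtain ⟨p, hp, hmax⟩ := ((pts a n).filter (· ≤ y)).exists_max_image id
    ⟨0, Finset.mem_filter.2 ⟨zero_mem_pts hn, hy.1⟩⟩
  obtain ⟨hp, hpy⟩ := Finset.mem_filter.1 hp
  have hgap : y - p ≤ gapAt a n p :=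
    sub_le_gapAt hp hy.2 fun p' hp' hy' => hmax p' (Finset.mem_filter.2 ⟨hp', hy'⟩)
  exact Set.mem_iUnion₂.2 ⟨p, hp, hpy, by linarith⟩

lemma one_le_sum_gapAt {a : ℝ} {n : ℕ} (hn : 0 < n) : 1 ≤ ∑ p ∈ pts a n, gapAt a n p := by
  have hvol := (MeasureTheory.measure_mono (μ := MeasureTheory.volume)
    (Ico_subset_iUnion_Icc_gapAt (a := a) hn)).trans (MeasureTheory.measure_biUnion_finset_le _ _)
  simp only [Real.volume_Ico, Real.volume_Icc, add_sub_cancel_left, sub_zero] at hvol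
  rw [← ENNReal.ofReal_sum_of_nonneg fun p _ => gapAt_nonneg a n p] at hvol
  exact (ENNReal.ofReal_le_ofReal_iff (Finset.sum_nonneg fun p _ => gapAt_nonneg a n p)).1 hvol

/-- A candidate for the gap lengths of the configuration of `n` points: from the point of index `x`,
moving forward by `d x` along the circle leads to some point of the configuration, not required to
be the next one, and the distances `d x` add up to the length of the circle. -/
structure IsGapFunction (a : ℝ) (n : ℕ) (d : ℕ → ℝ) : Prop where
  pos : ∀ x < n, 0 < d x
  exists_add_eq : ∀ x < n, ∃ y < n, x • (a : UnitAddCircle) + d x = y • (a : UnitAddCircle)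
  sum_eq_one : ∑ x ∈ Finset.range n, d x = 1

namespace IsGapFunction

variable {a : ℝ} {n : ℕ} {d : ℕ → ℝ}

lemma gapAt_fract_le (h : IsGapFunction a n d) {x : ℕ} (hx : x < n) :
    gapAt a n (Int.fract (a * x)) ≤ d x := by
  obtain ⟨y, hy, hxy⟩ := h.exists_add_eq x hx
  refine gapAt_le_of_coe_add_eq (fract_mem_pts hx) (fract_mem_pts hy) (h.pos x hx) ?_
  rwa [coe_fract_mul_natCast, coe_fract_mul_natCast]

lemma gapAt_fract_eq (h : IsGapFunction a n d) (hcard : (pts a n).card = n) {x : ℕ} (hx : x < n) :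
    gapAt a n (Int.fract (a * x)) = d x := by
  have hle : ∀ y ∈ Finset.range n, gapAt a n (Int.fract (a * y)) ≤ d y := fun y hy =>
    h.gapAt_fract_le (Finset.mem_range.1 hy)
  have hge : ∑ y ∈ Finset.range n, d y ≤ ∑ y ∈ Finset.range n, gapAt a n (Int.fract (a * y)) :=
    calc ∑ y ∈ Finset.range n, d y = 1 := h.sum_eq_one
      _ ≤ ∑ p ∈ pts a n, gapAt a n p := one_le_sum_gapAt (Nat.zero_lt_of_lt hx)
      _ = _ := Finset.sum_image (injOn_fract_of_card_pts hcard)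
  exact (Finset.sum_eq_sum_iff_of_le hle).1 ((Finset.sum_le_sum hle).antisymm hge) x
    (Finset.mem_range.2 hx)

theorem gaps_eq (h : IsGapFunction a n d) (hcard : (pts a n).card = n) :
    gaps a n = (Multiset.range n).map d := by
  rw [gaps, pts, Finset.image_val_of_injOn (injOn_fract_of_card_pts hcard), Multiset.map_map]
  exact Multiset.map_congr rfl fun x hx => h.gapAt_fract_eq hcard (Multiset.mem_range.1 hx)

/-- Reversing the order of the indices turns the configuration of `a` into a translate of that
of `-a`. -/
lemma reflect (h : IsGapFunction a n d) : IsGapFunction (-a) n fun x => d (n - 1 - x) where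
  pos x hx := h.pos _ (by omega)
  exists_add_eq x hx := by
    obtain ⟨y, hy, hxy⟩ := h.exists_add_eq (n - 1 - x) (by omega)
    refine ⟨n - 1 - y, by omega, ?_⟩
    have hsub : ∀ z < n, (n - 1 - z) • (a : UnitAddCircle) =
        (n - 1) • (a : UnitAddCircle) - z • (a : UnitAddCircle) :=
      fun z hz => by rw [sub_nsmul _ (by omega), sub_eq_add_neg]
    rw [hsub x hx] at hxy
    simp only [AddCircle.coe_neg, smul_neg, hsub y hy, ← hxy]
    abel
  sum_eq_one := by rw [Finset.sum_range_reflect, h.sum_eq_one]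

end IsGapFunction

/-- The distance from the point of index `x` to the point of index `x + l + m`, `x + l` or `x - m`,
for `x` in the ranges `x < s`, `s ≤ x < m` and `m ≤ x` respectively, when `m • a = -w` and
`l • a = u` on the circle. -/
noncomputable def threeGap (u w : ℝ) (m s x : ℕ) : ℝ :=
  if x < s then u - w else if x < m then u else w

section threeGap

variable {a u w : ℝ} {m l s : ℕ}

lemma threeGap_pos (hu : 0 < u) (hw : 0 < w) (hwu : s ≠ 0 → w < u) (x : ℕ) :
    0 < threeGap u w m s x := by
  rw [threeGap]
  split_ifs with hxs
  · exact sub_pos.2 (hwu (Nat.ne_zero_of_lt hxs))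
  · exact hu
  · exact hw

lemma map_range_threeGap (u w : ℝ) (l : ℕ) (hs : s ≤ m) :
    (Multiset.range (m + l + s)).map (threeGap u w m s) =
      Multiset.replicate (m - s) u + Multiset.replicate s (u - w) +
        Multiset.replicate (l + s) w := by
  have hn : m + l + s = s + (m - s) + (l + s) := by omega
  rw [hn, Multiset.range_add, Multiset.range_add, Multiset.map_add, Multiset.map_add,
    Multiset.map_map, Multiset.map_map, map_range_eq_replicate (c := u - w),
    map_range_eq_replicate (c := u), map_range_eq_replicate (c := w),
    add_comm (Multiset.replicate s _)]
  all_goals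
    intro x hx
    grind [threeGap]

lemma sum_range_threeGap (u w : ℝ) (l : ℕ) (hs : s ≤ m) :
    ∑ x ∈ Finset.range (m + l + s), threeGap u w m s x = m * u + l * w := by
  rw [Finset.sum, Finset.range_val, map_range_threeGap u w l hs]
  simp only [Multiset.sum_add, Multiset.sum_replicate, nsmul_eq_mul]
  push_cast [hs]
  ring

lemma exists_nsmul_add_threeGap_eq (hm : m • (a : UnitAddCircle) = -(w : UnitAddCircle))
    (hl : l • (a : UnitAddCircle) = u) (hs : s ≤ m) {x : ℕ} (hx : x < m + l + s) :
    ∃ y < m + l + s, x • (a : UnitAddCircle) + threeGap u w m s x = y • (a : UnitAddCircle) := by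
  rw [threeGap]
  split_ifs with hxs hxm
  · refine ⟨x + l + m, by omega, ?_⟩
    rw [add_nsmul, add_nsmul, hm, hl, AddCircle.coe_sub]
    abel
  · exact ⟨x + l, by omega, by rw [add_nsmul, hl]⟩
  · obtain ⟨y, rfl⟩ := Nat.exists_eq_add_of_le (not_lt.1 hxm)
    exact ⟨y, by omega, by rw [add_nsmul, hm]; abel⟩

lemma isGapFunction_threeGap (hm : m • (a : UnitAddCircle) = -(w : UnitAddCircle))
    (hl : l • (a : UnitAddCircle) = u) (hu : 0 < u) (hw : 0 < w) (hwu : s ≠ 0 → w < u)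
    (hsum : m * u + l * w = 1) (hs : s ≤ m) :
    IsGapFunction a (m + l + s) (threeGap u w m s) where
  pos x _ := threeGap_pos hu hw hwu x
  exists_add_eq _ hx := exists_nsmul_add_threeGap_eq hm hl hs hx
  sum_eq_one := (sum_range_threeGap u w l hs).trans hsum

theorem gaps_eq_of_nsmul_eq {ε : ℤ} (hε : ε = 1 ∨ ε = -1)
    (hm : m • (a : UnitAddCircle) = ε • (w : UnitAddCircle))
    (hl : l • (a : UnitAddCircle) = -(ε • (u : UnitAddCircle))) (hw : 0 < w) (hwu : w ≤ u)
    (hsum : m * u + l * w = 1) (hs : s ≤ m) (hcard : (pts a (m + l + s)).card = m + l + s) :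
    gaps a (m + l + s) =
      Multiset.replicate (m - s) u + Multiset.replicate s (u - w) +
        Multiset.replicate (l + s) w := by
  have hu : 0 < u := hw.trans_le hwu
  have hlt : s ≠ 0 → w < u := by
    refine fun hs0 => hwu.lt_of_ne ?_
    rintro rfl
    refine nsmul_ne_zero_of_card_pts (x := m + l) hcard (by omega) (by omega) ?_
    rw [add_nsmul, hm, hl, add_neg_cancel]
  rw [← map_range_threeGap u w l hs]
  rcases hε with rfl | rfl
  · have hneg : IsGapFunction (-a) (m + l + s) (threeGap u w m s) :=
      isGapFunction_threeGap (by simp [hm]) (by simp [hl]) hu hw hlt hsum hs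
    rw [← map_range_reflect]
    exact (neg_neg a ▸ hneg.reflect).gaps_eq hcard
  · exact (isGapFunction_threeGap (by simp [hm]) (by simp [hl]) hu hw hlt hsum hs).gaps_eq hcard

end threeGap

section EuclideanAlgorithm

variable {k q : ℕ → ℕ}

lemma remainder_nonneg {K : Type*} [Field K] [LinearOrder K] [IsStrictOrderedRing K] [FloorRing K]
    {θ : ℕ → K} (hθ0 : 0 ≤ θ 0) (hθ1 : 0 ≤ θ 1)
    (hk : ∀ i, (k (i + 1) : ℤ) = ⌊θ i / θ (i + 1)⌋)
    (hθrec : ∀ i, θ (i + 2) = θ i - (k (i + 1) : K) * θ (i + 1)) (i : ℕ) : 0 ≤ θ i := by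
  induction i using Nat.twoStepInduction with
  | zero => exact hθ0
  | one => exact hθ1
  | more i ih ih' =>
    rcases ih'.eq_or_lt with h0 | hpos
    · rwa [hθrec, ← h0, mul_zero, sub_zero]
    · have hfloor : ((k (i + 1) : ℤ) : K) = ⌊θ i / θ (i + 1)⌋ := congrArg _ (hk i)
      rw [hθrec, ← Int.cast_natCast, hfloor]
      exact Int.sub_floor_div_mul_nonneg _ hpos

lemma denominator_mul_remainder_add {R : Type*} [CommRing R] {θ : ℕ → R}
    (hθrec : ∀ i, θ (i + 2) = θ i - (k (i + 1) : R) * θ (i + 1))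
    (hqrec : ∀ i, q (i + 2) = q i + k (i + 1) * q (i + 1)) (i : ℕ) :
    q (i + 1) * θ i + q i * θ (i + 1) = q 1 * θ 0 + q 0 * θ 1 := by
  induction i with
  | zero => rfl
  | succ i ih =>
    rw [← ih, hqrec, hθrec]
    push_cast
    ring

lemma denominator_nsmul_eq {G : Type*} [AddCommGroup G] {g : G} {θ : ℕ → G}
    (h0 : q 0 • g = -θ 0) (h1 : q 1 • g = θ 1)
    (hθrec : ∀ i, θ (i + 2) = θ i - k (i + 1) • θ (i + 1))
    (hqrec : ∀ i, q (i + 2) = q i + k (i + 1) * q (i + 1)) (i : ℕ) :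
    q i • g = (-1 : ℤ) ^ (i + 1) • θ i := by
  induction i using Nat.twoStepInduction with
  | zero => simpa using h0
  | one => simpa using h1
  | more i ih ih' =>
    rw [hqrec, add_nsmul, mul_nsmul', ih, ih', hθrec]
    module

lemma add_mul_denominator_nsmul_eq {G : Type*} [AddCommGroup G] {g : G} {θ : ℕ → G}
    (h : ∀ i, q i • g = (-1 : ℤ) ^ (i + 1) • θ i) (i t : ℕ) :
    (q i + t * q (i + 1)) • g = -((-1 : ℤ) ^ i • (θ i - t • θ (i + 1))) := by
  rw [add_nsmul, mul_nsmul', h, h]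
  module

end EuclideanAlgorithm

theorem quantitative_three_distance_general (a : ℝ) (ha0 : 0 < a)
    (θ : ℕ → ℝ) (q k : ℕ → ℕ)
    (hθ0 : θ 0 = 1) (hθ1 : θ 1 = a)
    (hq0 : q 0 = 0) (hq1 : q 1 = 1)
    (hk : ∀ i, (k (i + 1) : ℤ) = ⌊θ i / θ (i + 1)⌋)
    (hθrec : ∀ i, θ (i + 2) = θ i - (k (i + 1) : ℝ) * θ (i + 1))
    (hqrec : ∀ i, q (i + 2) = q i + k (i + 1) * q (i + 1))
    (i t s : ℕ) (ht : t < k (i + 1)) (hs : s < q (i + 1))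
    (hcard : (pts a (q (i + 1) + (q i + t * q (i + 1)) + s)).card =
      q (i + 1) + (q i + t * q (i + 1)) + s) :
    gaps a (q (i + 1) + (q i + t * q (i + 1)) + s) =
      Multiset.replicate (q (i + 1) - s) (θ i - (t : ℝ) * θ (i + 1)) +
      Multiset.replicate s (θ i - ((t : ℝ) + 1) * θ (i + 1)) +
      Multiset.replicate (q i + t * q (i + 1) + s) (θ (i + 1)) := by
  have hθ := remainder_nonneg (by simp [hθ0]) (by simpa [hθ1] using ha0.le) hk hθrec
  have hw : 0 < θ (i + 1) := (hθ (i + 1)).lt_of_ne fun h0 => by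
    -- For rational `a` the remainders reach `0`, where division by zero makes the quotient zero.
    have hk0 := hk i
    rw [← h0, div_zero, Int.floor_zero] at hk0
    omega
  have hwu : θ (i + 1) ≤ θ i - t * θ (i + 1) := by
    have hkt : (t : ℝ) + 1 ≤ k (i + 1) := by exact_mod_cast ht
    nlinarith [hθ (i + 2), hθrec i]
  have hsum := denominator_mul_remainder_add hθrec hqrec i
  have hcircle := denominator_nsmul_eq (g := (a : UnitAddCircle)) (θ := fun i => θ i)
    (by simp [hq0, hθ0]) (by simp [hq1, hθ1])
    (fun i => by simp [hθrec, ← nsmul_eq_mul]) hqrec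
  have hl : (q i + t * q (i + 1)) • (a : UnitAddCircle) =
      -((-1 : ℤ) ^ i • ((θ i - t * θ (i + 1) : ℝ) : UnitAddCircle)) := by
    rw [add_mul_denominator_nsmul_eq hcircle, ← nsmul_eq_mul, AddCircle.coe_sub,
      AddCircle.coe_nsmul]
  rw [gaps_eq_of_nsmul_eq (neg_one_pow_eq_or ℤ i) (by simpa [pow_succ] using hcircle (i + 1)) hl hw
    hwu ?_ hs.le hcard]
  · ring_nf
  · rw [hq0, hq1, hθ0] at hsum
    push_cast at hsum ⊢
    linear_combination hsum

/-- **Quantitative three-distance theorem.**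
Indexing is shifted by one: `θ (m+1)`, `q (m+1)` denote the mathematical `θ_m`, `q_m`
(so `θ 0 = θ₋₁ = 1`, `θ 1 = θ₀ = a`, `q 0 = q₋₁ = 0`, `q 1 = q₀ = 1`), and `k (i+1) = k_{i+1}`.
For `i ≥ 0`, `0 ≤ t < k_{i+1}` and `0 ≤ s < q_i`, with `n = q_i + q_{i-1,t} + s`, the multiset
of the `n` gap lengths consists of `q_i - s` copies of `θ_{i-1,t}`, `s` copies of
`θ_{i-1,t+1}` and `q_{i-1,t} + s` copies of `θ_i`. -/
theorem quantitative_three_distance (a : ℝ) (ha0 : 0 < a) (ha1 : a < 1) (hirr : Irrational a)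
    (θ : ℕ → ℝ) (q k : ℕ → ℕ)
    (hθ0 : θ 0 = 1) (hθ1 : θ 1 = a)
    (hq0 : q 0 = 0) (hq1 : q 1 = 1)
    (hk : ∀ i, (k (i + 1) : ℤ) = ⌊θ i / θ (i + 1)⌋)
    (hθrec : ∀ i, θ (i + 2) = θ i - (k (i + 1) : ℝ) * θ (i + 1))
    (hqrec : ∀ i, q (i + 2) = q i + k (i + 1) * q (i + 1))
    (i t s : ℕ) (ht : t < k (i + 1)) (hs : s < q (i + 1)) :
    gaps a (q (i + 1) + (q i + t * q (i + 1)) + s) =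
      Multiset.replicate (q (i + 1) - s) (θ i - (t : ℝ) * θ (i + 1)) +
      Multiset.replicate s (θ i - ((t : ℝ) + 1) * θ (i + 1)) +
      Multiset.replicate (q i + t * q (i + 1) + s) (θ (i + 1)) := by
  exact quantitative_three_distance_general a ha0 θ q k hθ0 hθ1 hq0 hq1 hk hθrec hqrec i t s ht hs
    (card_pts_of_irrational hirr _)
end

section
/- Distance update for the subtraction-based step, even case: let b ∈ [0,1), let i ≥ 0 be even, let 0 ≤ t < k_{i+1}, and set n = q_i + q_{i−1,t}. Then d_{n+q_i}(b) = d_n(b) if d_n(b) < θ_i, and d_{n+q_i}(b) = d_n(b) − θ_i otherwise. -/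
/-- `dLeft a b n = min { {b - a·x} : 0 ≤ x < n }`, the distance from `b` to the nearest point
of the configuration `{a·x mod 1 : 0 ≤ x < n}` lying to its left (cyclically). -/
noncomputable def dLeft (a b : ℝ) (n : ℕ) : ℝ :=
  sInf {y : ℝ | ∃ x : ℕ, x < n ∧ y = Int.fract (b - a * x)}

/-!
If `a q = p + δ` with `p` an integer, adding `q` to `x` moves `b - a x` to the left by `δ` modulo
`1`. Points at left distance at least `δ` from `b` are therefore just translated by `δ`. When
`d_n(b) < δ`, a new point `a w` beating the nearest old one `a z` would give `a (w - z)` a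
fractional part strictly between `0` and `δ`. For `δ = θ_i` with `i` even this is excluded because
`θ_i` is a best one-sided approximation: in the unimodular basis `(q_i, p_i), (q_{i+1}, p_{i+1})`,
an integer pair `(m, l)` with `a m - l` in `(0, θ_i)` has `m ≤ 0` or `m ≥ q_i + q_{i+1}`.
-/

section Fract

variable {K : Type*} [Ring K] [LinearOrder K] [IsStrictOrderedRing K] [FloorRing K]

lemma fract_sub_eq_sub_of_le_fract {y δ : K} (hδ : 0 ≤ δ) (hle : δ ≤ Int.fract y) :
    Int.fract (y - δ) = Int.fract y - δ :=
  Int.fract_eq_iff.2 ⟨sub_nonneg.2 hle, (sub_le_self _ hδ).trans_lt (Int.fract_lt_one y), ⌊y⌋, by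
    rw [sub_sub_sub_cancel_right, Int.self_sub_fract]⟩

lemma fract_sub_eq_fract_sub_fract {x y : K} (hle : Int.fract y ≤ Int.fract x) :
    Int.fract (x - y) = Int.fract x - Int.fract y := by
  rw [← fract_sub_eq_sub_of_le_fract (Int.fract_nonneg y) hle, Int.fract_eq_fract]
  refine ⟨-⌊y⌋, ?_⟩
  rw [sub_sub_sub_cancel_left, Int.cast_neg, ← Int.self_sub_floor, sub_sub_cancel_left]

end Fract

section DLeft

variable {a b c δ : ℝ} {m n q x : ℕ} {p : ℤ}

lemma dLeft_le_fract (hx : x < n) : dLeft a b n ≤ Int.fract (b - a * x) :=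
  csInf_le ⟨0, by rintro _ ⟨y, -, rfl⟩; exact Int.fract_nonneg _⟩ ⟨x, hx, rfl⟩

lemma le_dLeft (hn : 0 < n) (hle : ∀ x : ℕ, x < n → c ≤ Int.fract (b - a * x)) :
    c ≤ dLeft a b n :=
  le_csInf ⟨_, 0, hn, rfl⟩ (by rintro _ ⟨x, hx, rfl⟩; exact hle x hx)

lemma exists_fract_eq_dLeft (a b : ℝ) (hn : 0 < n) :
    ∃ x : ℕ, x < n ∧ Int.fract (b - a * x) = dLeft a b n := by
  obtain ⟨x, hx, hmin⟩ := Finset.exists_min_image (Finset.range n)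
    (fun x : ℕ ↦ Int.fract (b - a * x)) ⟨0, Finset.mem_range.2 hn⟩
  rw [Finset.mem_range] at hx
  exact ⟨x, hx, le_antisymm (le_dLeft hn fun y hy ↦ hmin y (Finset.mem_range.2 hy))
    (dLeft_le_fract hx)⟩

lemma dLeft_le_dLeft (hm : 0 < m) (hmn : m ≤ n) : dLeft a b n ≤ dLeft a b m :=
  le_dLeft hm fun _ hx ↦ dLeft_le_fract (hx.trans_le hmn)

lemma fract_sub_mul_add_eq_sub (hqp : a * q - p = δ) (hδ : 0 ≤ δ)
    (hle : δ ≤ Int.fract (b - a * x)) :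
    Int.fract (b - a * ↑(x + q)) = Int.fract (b - a * x) - δ := by
  have hshift : b - a * ↑(x + q) = b - a * x - δ - p := by
    rw [← hqp]; push_cast; ring
  rw [hshift, Int.fract_sub_intCast, fract_sub_eq_sub_of_le_fract hδ hle]

theorem dLeft_add_eq_sub (hn : 0 < n) (hqn : q ≤ n) (hqp : a * q - p = δ) (hδ : 0 ≤ δ)
    (hle : δ ≤ dLeft a b n) : dLeft a b (n + q) = dLeft a b n - δ := by
  apply le_antisymm
  · obtain ⟨z, hzn, hz⟩ := exists_fract_eq_dLeft a b hn
    rw [← hz, ← fract_sub_mul_add_eq_sub hqp hδ (hz.symm ▸ hle)]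
    exact dLeft_le_fract (by lia)
  · refine le_dLeft (by lia) fun w hw ↦ ?_
    rcases lt_or_ge w n with hwn | hnw
    · exact (sub_le_self _ hδ).trans (dLeft_le_fract hwn)
    · obtain ⟨y, rfl⟩ := Nat.exists_eq_add_of_le' (hqn.trans hnw)
      have hy : dLeft a b n ≤ Int.fract (b - a * y) := dLeft_le_fract (by lia)
      rw [fract_sub_mul_add_eq_sub hqp hδ (hle.trans hy)]
      exact sub_le_sub_right hy δ

theorem dLeft_eq_dLeft_of_forall_le_fract (hm : 0 < m) (hmn : m ≤ n)
    (hgap : ∀ x : ℕ, x < n → 0 < Int.fract (a * x) → δ ≤ Int.fract (a * x))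
    (hlt : dLeft a b m < δ) : dLeft a b n = dLeft a b m := by
  refine (dLeft_le_dLeft hm hmn).antisymm (le_dLeft (hm.trans_le hmn) fun w hw ↦ ?_)
  by_contra! hcloser
  have hmw : m ≤ w := by
    by_contra! hwm
    exact hcloser.not_ge (dLeft_le_fract hwm)
  obtain ⟨z, hzm, hz⟩ := exists_fract_eq_dLeft a b hm
  have hdiff : Int.fract (a * ↑(w - z)) = dLeft a b m - Int.fract (b - a * w) := by
    rw [← hz, ← fract_sub_eq_fract_sub_fract (hz.symm ▸ hcloser.le),
      Nat.cast_sub (hzm.le.trans hmw)]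
    ring_nf
  have hδ := hgap (w - z) (by lia) (hdiff ▸ sub_pos.2 hcloser)
  linarith [Int.fract_nonneg (b - a * w)]

end DLeft

theorem mul_sub_le_mul_sub_of_det_eq_one {R : Type*} [CommRing R] [LinearOrder R]
    [IsStrictOrderedRing R] {a : R} {q q' : ℕ} {p p' m l : ℤ} (hdet : p' * q - p * q' = 1)
    (hδ : 0 ≤ a * q - p) (hδ' : 0 ≤ p' - a * q')
    (hm : 0 < m) (hmq : m < q + q') (hpos : 0 < a * m - l) : a * q - p ≤ a * m - l := by
  obtain ⟨u, hu⟩ : ∃ u, u = p' * m - q' * l := ⟨_, rfl⟩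
  obtain ⟨v, hv⟩ : ∃ v, v = q * l - p * m := ⟨_, rfl⟩
  have hm_eq : m = u * q + v * q' := by
    linear_combination (-m) * hdet - q * hu - q' * hv
  have hl_eq : l = u * p + v * p' := by
    linear_combination (-l) * hdet - p * hu - p' * hv
  have hcomb : a * m - l = u * (a * q - p) - v * (p' - a * q') := by
    rw [hm_eq, hl_eq]; push_cast; ring
  rw [hcomb] at hpos ⊢
  rcases le_or_gt u 0 with hu_nonpos | hu_pos
  · have hv_neg : v < 0 := by
      by_contra! hv_nonneg
      have huR : (u : R) ≤ 0 := mod_cast hu_nonpos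
      have hvR : (0 : R) ≤ v := mod_cast hv_nonneg
      linarith [mul_nonpos_of_nonpos_of_nonneg huR hδ, mul_nonneg hvR hδ']
    have hm_nonpos : m ≤ 0 := hm_eq ▸ add_nonpos
      (mul_nonpos_of_nonpos_of_nonneg hu_nonpos q.cast_nonneg)
      (mul_nonpos_of_nonpos_of_nonneg hv_neg.le q'.cast_nonneg)
    exact absurd hm hm_nonpos.not_gt
  · have hv_nonpos : v ≤ 0 := by
      by_contra! hv_pos
      have hm_ge : (q + q' : ℤ) ≤ m := hm_eq ▸ add_le_add
        (le_mul_of_one_le_left q.cast_nonneg hu_pos) (le_mul_of_one_le_left q'.cast_nonneg hv_pos)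
      exact hmq.not_ge hm_ge
    have huR : (1 : R) ≤ u := mod_cast hu_pos
    have hvR : (v : R) ≤ 0 := mod_cast hv_nonpos
    linarith [le_mul_of_one_le_left hδ huR, mul_nonpos_of_nonpos_of_nonneg hvR hδ']

/-- The continued fraction expansion of `a` read as the Euclidean algorithm on `(1, a)`:
partial quotients `k`, remainders `θ` and denominators `q` of the convergents. Indices of `θ` and
`q` are shifted by one, so that `θ (m + 1)` and `q (m + 1)` are the mathematical `θ_m` and `q_m`,
whereas `k m` is `k_m` and `k 0` is arbitrary. After a remainder `0`, which a rational `a` reaches,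
`x / 0 = 0` makes all further partial quotients `0`. -/
structure IsEuclideanExpansion {K : Type*} [Field K] [LinearOrder K] [FloorRing K]
    (a : K) (θ : ℕ → K) (q k : ℕ → ℕ) : Prop where
  remainder_zero : θ 0 = 1
  remainder_one : θ 1 = a
  denom_zero : q 0 = 0
  denom_one : q 1 = 1
  quotient_eq_floor : ∀ i, (k (i + 1) : ℤ) = ⌊θ i / θ (i + 1)⌋
  remainder_add_two : ∀ i, θ (i + 2) = θ i - (k (i + 1) : K) * θ (i + 1)
  denom_add_two : ∀ i, q (i + 2) = q i + k (i + 1) * q (i + 1)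

/-- The numerators `p` of the convergents with partial quotients `k`; `convergentNum k (m + 1)` is
the mathematical `p_m`, with the same shift of indices as in `IsEuclideanExpansion`. -/
def convergentNum (k : ℕ → ℕ) : ℕ → ℕ
  | 0 => 1
  | 1 => 0
  | j + 2 => convergentNum k j + k (j + 1) * convergentNum k (j + 1)

namespace IsEuclideanExpansion

variable {K : Type*} [Field K] [LinearOrder K] [FloorRing K] {a : K} {θ : ℕ → K} {q k : ℕ → ℕ}
  {i : ℕ}

lemma remainder_eq (h : IsEuclideanExpansion a θ q k) (j : ℕ) :
    θ j = (-1) ^ j * (convergentNum k j - a * q j) := by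
  induction j using Nat.twoStepInduction with
  | zero => simp [convergentNum, h.remainder_zero, h.denom_zero]
  | one => simp [convergentNum, h.remainder_one, h.denom_one]
  | more j ih ih' =>
    rw [h.remainder_add_two, ih, ih', convergentNum, h.denom_add_two]
    push_cast
    ring

lemma det_eq (h : IsEuclideanExpansion a θ q k) (j : ℕ) :
    (convergentNum k j * q (j + 1) - convergentNum k (j + 1) * q j : ℤ) = (-1) ^ j := by
  induction j with
  | zero => simp [convergentNum, h.denom_zero, h.denom_one]
  | succ j ih =>
    rw [pow_succ, ← ih, convergentNum, h.denom_add_two]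
    push_cast
    ring

lemma mul_denom_sub_num (h : IsEuclideanExpansion a θ q k) (hi : Odd i) :
    a * q i - (convergentNum k i : ℤ) = θ i := by
  simp [h.remainder_eq i, hi.neg_one_pow]

lemma num_sub_mul_denom (h : IsEuclideanExpansion a θ q k) (hi : Even i) :
    (convergentNum k i : ℤ) - a * q i = θ i := by
  simp [h.remainder_eq i, hi.neg_one_pow]

lemma denom_succ_pos (h : IsEuclideanExpansion a θ q k) (hi : Even i) : 0 < q (i + 1) := by
  have hdet := h.det_eq i
  rw [hi.neg_one_pow] at hdet
  refine Nat.pos_of_ne_zero fun hzero ↦ ?_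
  rw [hzero, Nat.cast_zero, mul_zero] at hdet
  have : (0 : ℤ) ≤ convergentNum k (i + 1) * q i := by positivity
  lia

variable [IsStrictOrderedRing K]

lemma remainder_nonneg (h : IsEuclideanExpansion a θ q k) (ha : 0 ≤ a) (j : ℕ) : 0 ≤ θ j := by
  induction j using Nat.twoStepInduction with
  | zero => exact h.remainder_zero.symm ▸ zero_le_one
  | one => exact h.remainder_one.symm ▸ ha
  | more j ih ih' =>
    have hk : (k (j + 1) : K) = ⌊θ j / θ (j + 1)⌋ := by
      rw [← h.quotient_eq_floor j, Int.cast_natCast]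
    rw [h.remainder_add_two, hk]
    rcases ih'.eq_or_lt with hzero | hpos
    · simpa [← hzero] using ih
    · exact Int.sub_floor_div_mul_nonneg _ hpos

theorem remainder_le_fract (h : IsEuclideanExpansion a θ q k) (ha : 0 ≤ a) (hi : Odd i) {x : ℕ}
    (hx : x < q i + q (i + 1)) (hpos : 0 < Int.fract (a * x)) : θ i ≤ Int.fract (a * x) := by
  have hdet : (convergentNum k (i + 1) * q i - convergentNum k i * q (i + 1) : ℤ) = 1 := by
    linear_combination hi.neg_one_pow (α := ℤ) * (-1) - h.det_eq i
  have hx0 : x ≠ 0 := by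
    rintro rfl
    simp at hpos
  have hθ := h.mul_denom_sub_num hi
  have hθ' := h.num_sub_mul_denom hi.add_one
  rw [← Int.self_sub_floor, ← Int.cast_natCast x] at hpos ⊢
  rw [← hθ]
  exact mul_sub_le_mul_sub_of_det_eq_one hdet (hθ ▸ h.remainder_nonneg ha i)
    (hθ' ▸ h.remainder_nonneg ha (i + 1)) (by lia) (by lia) hpos

end IsEuclideanExpansion

theorem distance_update_subtractive_even_general {a : ℝ} (ha : 0 < a) {θ : ℕ → ℝ} {q k : ℕ → ℕ}
    (h : IsEuclideanExpansion a θ q k) (b : ℝ) {i : ℕ} (hi : Even i) {t : ℕ} (ht : t < k (i + 1))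
    {n : ℕ} (hn : n = q (i + 1) + (q i + t * q (i + 1))) :
    (dLeft a b n < θ (i + 1) → dLeft a b (n + q (i + 1)) = dLeft a b n) ∧
    (θ (i + 1) ≤ dLeft a b n → dLeft a b (n + q (i + 1)) = dLeft a b n - θ (i + 1)) := by
  have hq_pos : 0 < q (i + 1) := h.denom_succ_pos hi
  have hqn : q (i + 1) ≤ n := hn ▸ Nat.le_add_right _ _
  have hn_pos : 0 < n := hq_pos.trans_le hqn
  have hn_le : n + q (i + 1) ≤ q (i + 1) + q (i + 2) := by
    have : (t + 1) * q (i + 1) ≤ k (i + 1) * q (i + 1) := Nat.mul_le_mul_right _ ht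
    rw [hn, h.denom_add_two]
    lia
  refine ⟨dLeft_eq_dLeft_of_forall_le_fract hn_pos (Nat.le_add_right _ _) fun x hx ↦ ?_, ?_⟩
  · exact h.remainder_le_fract ha.le hi.add_one (hx.trans_le hn_le)
  · exact dLeft_add_eq_sub hn_pos hqn (h.mul_denom_sub_num hi.add_one)
      (h.remainder_nonneg ha.le (i + 1))

/-- **Distance update for the subtraction-based step, even case.**
Indexing is shifted by one: `θ (m+1)`, `q (m+1)` denote the mathematical `θ_m`, `q_m`
(so `θ 0 = θ₋₁ = 1`, `θ 1 = θ₀ = a`, `q 0 = q₋₁ = 0`, `q 1 = q₀ = 1`), and `k (i+1) = k_{i+1}`.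
For `b ∈ [0,1)`, `i` even, `0 ≤ t < k_{i+1}` and `n = q_i + q_{i-1,t}`:
`d_{n+q_i}(b) = d_n(b)` if `d_n(b) < θ_i`, and `d_{n+q_i}(b) = d_n(b) - θ_i` otherwise. -/
theorem distance_update_subtractive_even (a : ℝ) (ha0 : 0 < a) (ha1 : a < 1)
    (hirr : Irrational a)
    (θ : ℕ → ℝ) (q k : ℕ → ℕ)
    (hθ0 : θ 0 = 1) (hθ1 : θ 1 = a)
    (hq0 : q 0 = 0) (hq1 : q 1 = 1)
    (hk : ∀ i, (k (i + 1) : ℤ) = ⌊θ i / θ (i + 1)⌋)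
    (hθrec : ∀ i, θ (i + 2) = θ i - (k (i + 1) : ℝ) * θ (i + 1))
    (hqrec : ∀ i, q (i + 2) = q i + k (i + 1) * q (i + 1))
    (b : ℝ) (hb0 : 0 ≤ b) (hb1 : b < 1)
    (i : ℕ) (hi : Even i) (t : ℕ) (ht : t < k (i + 1))
    (n : ℕ) (hn : n = q (i + 1) + (q i + t * q (i + 1))) :
    (dLeft a b n < θ (i + 1) → dLeft a b (n + q (i + 1)) = dLeft a b n) ∧
    (θ (i + 1) ≤ dLeft a b n → dLeft a b (n + q (i + 1)) = dLeft a b n - θ (i + 1)) := by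
  exact distance_update_subtractive_even_general ha0
    ⟨hθ0, hθ1, hq0, hq1, hk, hθrec, hqrec⟩ b hi ht hn
end
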